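/- Let s ≥ 3 be an odd integer and let g : ℕ → ℝ be any function satisfying g(k) = 1 for all 2 ≤ k ≤ s + 2 and g(m) = 2·Σ_{k = ⌊(m−s+1)/2⌋}^{⌊m/2⌋} g(k) for all m ≥ s + 3. Then for every m > 5s + 5, g(m) ≤ m^{log₂(s+1)}. -/

import Mathlib

/-!
With `α = log₂ (s + 1)`, halving the argument divides `m ^ α` by `2 ^ α = s + 1`. Since `s` is odd,
the recursion always sums exactly `(s + 1) / 2` values of `g`, all at indices at most `m / 2`; the
factor `2` in front makes the total weight `s + 1`, so the bound `g m ≤ m ^ α` is inherited from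
those indices. It already holds on the initial segment `2 ≤ m ≤ s + 2`, where `g = 1`.
-/

theorem mul_sum_le_rpow {ι : Type*} {S : Finset ι} {f x : ι → ℝ} {b c t α : ℝ}
    (hb : 0 < b) (hc : 0 ≤ c) (ht : 0 ≤ t) (hα : 0 ≤ α) (hx : ∀ i ∈ S, 0 ≤ x i)
    (hbx : ∀ i ∈ S, b * x i ≤ t) (hf : ∀ i ∈ S, f i ≤ x i ^ α) (hcard : c * S.card ≤ b ^ α) :
    c * ∑ i ∈ S, f i ≤ t ^ α := by
  have hterm : ∀ i ∈ S, f i ≤ (t / b) ^ α := fun i hi ↦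
    (hf i hi).trans (Real.rpow_le_rpow (hx i hi) ((le_div_iff₀' hb).2 (hbx i hi)) hα)
  calc c * ∑ i ∈ S, f i ≤ c * (S.card * (t / b) ^ α) := by
        gcongr
        simpa only [nsmul_eq_mul] using S.sum_le_card_nsmul f _ hterm
    _ = c * S.card * (t / b) ^ α := (mul_assoc _ _ _).symm
    _ ≤ b ^ α * (t / b) ^ α := by gcongr
    _ = t ^ α := by
        rw [← Real.mul_rpow hb.le (by positivity), mul_div_cancel₀ _ hb.ne']

theorem le_rpow_of_le_mul_sum {g : ℕ → ℝ} {S : ℕ → Finset ℕ} {a N : ℕ} {b c α : ℝ}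
    (ha : 0 < a) (hb : 1 < b) (hc : 0 ≤ c) (hα : 0 ≤ α)
    (hinit : ∀ m, a ≤ m → m < N → g m ≤ (m : ℝ) ^ α)
    (hrec : ∀ m, N ≤ m → g m ≤ c * ∑ k ∈ S m, g k)
    (hS : ∀ m, N ≤ m → ∀ k ∈ S m, a ≤ k ∧ b * k ≤ m)
    (hcard : ∀ m, N ≤ m → c * (S m).card ≤ b ^ α) {m : ℕ} (hm : a ≤ m) :
    g m ≤ (m : ℝ) ^ α := by
  induction m using Nat.strong_induction_on with
  | _ m ih =>
    rcases lt_or_ge m N with hmN | hNm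
    · exact hinit m hm hmN
    · have hlt : ∀ k ∈ S m, k < m := fun k hk ↦ by
        obtain ⟨hak, hbk⟩ := hS m hNm k hk
        have hk_pos : (0 : ℝ) < k := by exact_mod_cast ha.trans_le hak
        exact_mod_cast (lt_mul_of_one_lt_left hk_pos hb).trans_le hbk
      exact (hrec m hNm).trans <| mul_sum_le_rpow (zero_lt_one.trans hb) hc m.cast_nonneg hα
        (fun k _ ↦ k.cast_nonneg) (fun k hk ↦ (hS m hNm k hk).2)
        (fun k hk ↦ ih k (hlt k hk) (hS m hNm k hk).1) (hcard m hNm)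

theorem two_mul_card_Icc_half_of_odd {s m : ℕ} (hodd : Odd s) (hsm : s ≤ m) :
    2 * (Finset.Icc ((m - s + 1) / 2) (m / 2)).card = s + 1 := by
  obtain ⟨r, rfl⟩ := hodd
  rw [Nat.card_Icc]
  omega

theorem upper_bound_odd_case_general {s : ℕ} (hodd : Odd s) {g : ℕ → ℝ}
    (hinit : ∀ k, 2 ≤ k → k ≤ s + 2 → g k ≤ 1)
    (hrec : ∀ m, s + 3 ≤ m →
      g m ≤ 2 * ∑ k ∈ Finset.Icc ((m - s + 1) / 2) (m / 2), g k)
    {m : ℕ} (hm : 2 ≤ m) :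
    g m ≤ (m : ℝ) ^ Real.logb 2 ((s : ℝ) + 1) := by
  have hα : 0 ≤ Real.logb 2 ((s : ℝ) + 1) :=
    Real.logb_nonneg one_lt_two (le_add_of_nonneg_left s.cast_nonneg)
  refine le_rpow_of_le_mul_sum two_pos one_lt_two zero_le_two hα (fun k hk hks ↦ ?_) hrec
    (fun n hn k hk ↦ ?_) (fun n hn ↦ ?_) hm
  · exact (hinit k hk (by omega)).trans
      (Real.one_le_rpow (by exact_mod_cast one_le_two.trans hk) hα)
  · rw [Finset.mem_Icc] at hk
    exact ⟨by omega, by exact_mod_cast (by omega : 2 * k ≤ n)⟩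
  · rw [Real.rpow_logb two_pos (by norm_num) s.cast_add_one_pos]
    exact_mod_cast (two_mul_card_Icc_half_of_odd hodd (by omega : s ≤ n)).le

theorem upper_bound_odd_case (s : ℕ) (hs : 3 ≤ s) (hodd : s % 2 = 1)
    (g : ℕ → ℝ)
    (hinit : ∀ k, 2 ≤ k → k ≤ s + 2 → g k = 1)
    (hrec : ∀ m, s + 3 ≤ m →
      g m = 2 * ∑ k ∈ Finset.Icc ((m - s + 1) / 2) (m / 2), g k) :
    ∀ m : ℕ, 5 * s + 5 < m → g m ≤ (m : ℝ) ^ (Real.logb 2 ((s : ℝ) + 1)) := fun _ hm ↦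
  upper_bound_odd_case_general (Nat.odd_iff.2 hodd) (fun k hk hks ↦ (hinit k hk hks).le)
    (fun n hn ↦ (hrec n hn).le) (by omega)
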